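/- Let $C$ be an $[n,k,d]$ linear code over a field $F$ with all-symbol $(r,\delta)$-locality, i.e., for every coordinate $i$ there is a punctured code $C_i$ of $C$ with $i$ in its support, $\dim(C_i) \leq r$, and $d_{\min}(C_i) \geq \delta$. Then $d \leq n - k + 1 - (\lceil k/r \rceil - 1)(\delta - 1)$. -/

import Mathlib

open Finset

variable (F : Type*) [Field F] [DecidableEq F] (n : ℕ)

/-- The linear map restricting a word of length `n` to the coordinates in `S`
(setting the remaining coordinates to zero). -/
def puncProj (S : Finset (Fin n)) : (Fin n → F) →ₗ[F] (Fin n → F) where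
  toFun c := fun j => if j ∈ S then c j else 0
  map_add' x y := by funext j; by_cases h : j ∈ S <;> simp [h]
  map_smul' a x := by funext j; by_cases h : j ∈ S <;> simp [h]

/-- The punctured code of `C` obtained by restricting to the coordinate set `S`. -/
def puncture (C : Submodule F (Fin n → F)) (S : Finset (Fin n)) :
    Submodule F (Fin n → F) :=
  C.map (puncProj F n S)

/-- `C` has all-symbol `(r,δ)`-locality: every coordinate in the support of `C`
lies in the support of a punctured code of dimension at most `r` and minimum
distance at least `δ`. -/
def HasLocality (C : Submodule F (Fin n → F)) (r δ : ℕ) : Prop :=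
  ∀ i : Fin n, (∃ c ∈ C, c i ≠ 0) →
    ∃ S : Finset (Fin n),
      (∃ c ∈ puncture F n C S, c i ≠ 0) ∧
      Module.finrank F ↥(puncture F n C S) ≤ r ∧
      ∀ c ∈ puncture F n C S, c ≠ 0 → δ ≤ hammingNorm c

/-- `d` is the minimum Hamming distance of the linear code `C`. -/
def IsMinDist (C : Submodule F (Fin n → F)) (d : ℕ) : Prop :=
  (∃ c ∈ C, c ≠ 0 ∧ hammingNorm c = d) ∧ ∀ c ∈ C, c ≠ 0 → d ≤ hammingNorm c

/-!
Starting from `T = ∅`, repeatedly enlarge `T` by a repair group `S` on which some codeword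
vanishing on `T` does not vanish. The words vanishing on `T`, punctured to `S`, are supported in
`S \ T`, so by the Singleton bound each step adds at least `δ - 1` more coordinates to `T` than the
dimension it costs, which is at most `r`. After `⌈k / r⌉ - 1` steps a nonzero subcode survives, and
the Singleton bound for it on the remaining `n - #T` coordinates gives the result.
-/

section Shortening

variable {K ι : Type*} [DivisionRing K]

/-- The shortened code of `C` at `T`: the subcode of words vanishing on `T`, here keeping the
(zero) coordinates in `T` instead of deleting them, so that all codes have the same length. -/
def shorten (C : Submodule K (ι → K)) (T : Finset ι) : Submodule K (ι → K) :=
  C ⊓ Submodule.pi ↑T fun _ => ⊥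

variable {C : Submodule K (ι → K)}

theorem mem_shorten {T : Finset ι} {c : ι → K} : c ∈ shorten C T ↔ c ∈ C ∧ ∀ j ∈ T, c j = 0 := by
  simp [shorten]

theorem shorten_le (C : Submodule K (ι → K)) (T : Finset ι) : shorten C T ≤ C :=
  inf_le_left

theorem shorten_empty (C : Submodule K (ι → K)) : shorten C ∅ = C := by
  simp [shorten]

theorem shorten_shorten [DecidableEq ι] (C : Submodule K (ι → K)) (S T : Finset ι) :
    shorten (shorten C T) S = shorten C (T ∪ S) := by
  ext c
  simp only [mem_shorten, Finset.mem_union, or_imp, forall_and, and_assoc]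

theorem shorten_ne_bot_of_card_lt_finrank [Finite ι] {B : Finset ι}
    (hB : #B < Module.finrank K C) : shorten C B ≠ ⊥ := by
  let restrict : C →ₗ[K] (B → K) := LinearMap.funLeft K K ((↑) : B → ι) ∘ₗ C.subtype
  have hker : LinearMap.ker restrict ≠ ⊥ :=
    LinearMap.ker_ne_bot_of_finrank_lt (by simpa using hB)
  obtain ⟨c, hc, hc0⟩ := Submodule.exists_mem_ne_zero_of_ne_bot hker
  refine (Submodule.ne_bot_iff _).2 ⟨c, mem_shorten.2 ⟨c.2, fun j hj => ?_⟩, by simpa using hc0⟩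
  exact congrFun (LinearMap.mem_ker.1 hc) ⟨j, hj⟩

theorem finrank_le_card_of_eq_zero_off [Finite ι] {A : Finset ι}
    (hA : ∀ c ∈ C, ∀ j ∉ A, c j = 0) : Module.finrank K C ≤ #A := by
  by_contra! hlt
  refine shorten_ne_bot_of_card_lt_finrank hlt ((Submodule.eq_bot_iff _).2 fun c hc => funext ?_)
  obtain ⟨hcC, hcA⟩ := mem_shorten.1 hc
  exact fun j => by_cases (hcA j) (hA c hcC j)

theorem singleton_bound [Fintype ι] [DecidableEq K] {A : Finset ι} {δ : ℕ} (hC : C ≠ ⊥)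
    (hA : ∀ c ∈ C, ∀ j ∉ A, c j = 0) (hδ : ∀ c ∈ C, c ≠ 0 → δ ≤ hammingNorm c) :
    Module.finrank K C + δ ≤ #A + 1 := by
  classical
  have hpos : 0 < Module.finrank K C := Submodule.one_le_finrank_iff.2 hC
  have hle : Module.finrank K C ≤ #A := finrank_le_card_of_eq_zero_off hA
  obtain ⟨B, hBA, hB⟩ := exists_subset_card_eq (show Module.finrank K C - 1 ≤ #A by lia)
  obtain ⟨c, hc, hc0⟩ := Submodule.exists_mem_ne_zero_of_ne_bot
    (shorten_ne_bot_of_card_lt_finrank (C := C) (B := B) (by lia))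
  obtain ⟨hcC, hcB⟩ := mem_shorten.1 hc
  have hsupp : ({j | c j ≠ 0} : Finset ι) ⊆ A \ B := fun j hj => by
    have hcj : c j ≠ 0 := (mem_filter_univ j).1 hj
    exact mem_sdiff.2 ⟨not_imp_comm.1 (hA c hcC j) hcj, fun hjB => hcj (hcB j hjB)⟩
  have hweight : hammingNorm c ≤ #(A \ B) := card_le_card hsupp
  have hcard : #(A \ B) + #B = #A := card_sdiff_add_card_eq_card hBA
  have hδc : δ ≤ hammingNorm c := hδ c hcC hc0
  lia

end Shortening

theorem finrank_map_add_finrank_inf_ker {K V W : Type*} [DivisionRing K] [AddCommGroup V]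
    [Module K V] [AddCommGroup W] [Module K W] (f : V →ₗ[K] W) (p : Submodule K V)
    [FiniteDimensional K p] :
    Module.finrank K (p.map f) + Module.finrank K ↥(p ⊓ LinearMap.ker f) = Module.finrank K p := by
  rw [← (f.domRestrict p).finrank_range_add_finrank_ker, LinearMap.range_domRestrict,
    LinearMap.ker_domRestrict, ← Submodule.map_comap_subtype, Submodule.finrank_map_subtype_eq]

section Puncturing

omit [DecidableEq F]

variable {F n} {C : Submodule F (Fin n → F)} {S T : Finset (Fin n)}

theorem puncProj_apply (S : Finset (Fin n)) (c : Fin n → F) (j : Fin n) :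
    puncProj F n S c j = if j ∈ S then c j else 0 :=
  rfl

theorem inf_ker_puncProj (C : Submodule F (Fin n → F)) (S : Finset (Fin n)) :
    C ⊓ LinearMap.ker (puncProj F n S) = shorten C S := by
  ext c
  simp [mem_shorten, funext_iff, puncProj_apply]

theorem finrank_puncture_add_finrank_shorten (C : Submodule F (Fin n → F))
    (S : Finset (Fin n)) :
    Module.finrank F (puncture F n C S) + Module.finrank F (shorten C S) =
      Module.finrank F C := by
  rw [← inf_ker_puncProj]
  exact finrank_map_add_finrank_inf_ker (puncProj F n S) C

theorem puncture_ne_bot {c : Fin n → F} (hc : c ∈ C) {i : Fin n} (hi : i ∈ S) (hci : c i ≠ 0) :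
    puncture F n C S ≠ ⊥ := by
  refine (Submodule.ne_bot_iff _).2 ⟨puncProj F n S c, Submodule.mem_map_of_mem hc, fun h => hci ?_⟩
  simpa [puncProj_apply, hi] using congrFun h i

theorem apply_eq_zero_of_mem_puncture {x : Fin n → F} (hx : x ∈ puncture F n C S) {j : Fin n}
    (hj : j ∉ S) : x j = 0 := by
  obtain ⟨c, -, rfl⟩ := hx
  exact if_neg hj

theorem apply_eq_zero_of_mem_puncture_shorten {x : Fin n → F}
    (hx : x ∈ puncture F n (shorten C T) S) {j : Fin n} (hj : j ∉ S \ T) : x j = 0 := by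
  by_cases hjS : j ∈ S
  · obtain ⟨c, hc, rfl⟩ := hx
    have hjT : j ∈ T := by_contra fun hjT => hj (mem_sdiff.2 ⟨hjS, hjT⟩)
    simp [puncProj_apply, (mem_shorten.1 hc).2 j hjT]
  · exact apply_eq_zero_of_mem_puncture hx hjS

end Puncturing

section Locality

variable {F n} {C : Submodule F (Fin n → F)} {S T : Finset (Fin n)} {r δ : ℕ}

/-- `S` is a repair group of `C` with parameters `(r, δ)`: the punctured code of `C` on `S` has
dimension at most `r` and minimum distance at least `δ` (or is zero). -/
structure IsRepairGroup (C : Submodule F (Fin n → F)) (r δ : ℕ) (S : Finset (Fin n)) : Prop where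
  finrank_le : Module.finrank F (puncture F n C S) ≤ r
  le_hammingNorm : ∀ c ∈ puncture F n C S, c ≠ 0 → δ ≤ hammingNorm c

/-- `C` has information `(r, δ)`-locality: the coordinates covered by repair groups contain an
information set of `C`. This is encoded as: no nonzero codeword vanishes on all of them. -/
def HasInformationLocality (C : Submodule F (Fin n → F)) (r δ : ℕ) : Prop :=
  ∀ c ∈ C, c ≠ 0 → ∃ S, IsRepairGroup C r δ S ∧ ∃ i ∈ S, c i ≠ 0

theorem HasLocality.hasInformationLocality (h : HasLocality F n C r δ) :
    HasInformationLocality C r δ := by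
  intro c hc hc0
  obtain ⟨i, hci⟩ := Function.ne_iff.1 hc0
  obtain ⟨S, ⟨x, hx, hxi⟩, hr, hδ⟩ := h i ⟨c, hc, hci⟩
  exact ⟨S, ⟨hr, hδ⟩, i, by_contra fun hi => hxi (apply_eq_zero_of_mem_puncture hx hi), hci⟩

theorem HasInformationLocality.pos (h : HasInformationLocality C r δ) (hC : C ≠ ⊥) : 0 < r := by
  obtain ⟨c, hc, hc0⟩ := Submodule.exists_mem_ne_zero_of_ne_bot hC
  obtain ⟨S, hS, i, hi, hci⟩ := h c hc hc0
  exact (Submodule.one_le_finrank_iff.2 (puncture_ne_bot hc hi hci)).trans hS.finrank_le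

theorem IsRepairGroup.mono {D : Submodule F (Fin n → F)} (hS : IsRepairGroup C r δ S)
    (hD : D ≤ C) : IsRepairGroup D r δ S where
  finrank_le := (Submodule.finrank_mono (Submodule.map_mono hD)).trans hS.finrank_le
  le_hammingNorm c hc := hS.le_hammingNorm c (Submodule.map_mono hD hc)

theorem IsRepairGroup.finrank_le_finrank_shorten_add (hS : IsRepairGroup C r δ S) :
    Module.finrank F C ≤ Module.finrank F (shorten C S) + r := by
  rw [← finrank_puncture_add_finrank_shorten C S, add_comm]
  gcongr
  exact hS.finrank_le

theorem IsRepairGroup.finrank_shorten_add_le (hS : IsRepairGroup C r δ S) {c : Fin n → F}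
    (hc : c ∈ shorten C T) {i : Fin n} (hi : i ∈ S) (hci : c i ≠ 0) :
    Module.finrank F (shorten C T) + δ ≤
      Module.finrank F (shorten C (T ∪ S)) + #(S \ T) + 1 := by
  have hdim := finrank_puncture_add_finrank_shorten (shorten C T) S
  rw [shorten_shorten] at hdim
  have hsingleton : Module.finrank F (puncture F n (shorten C T) S) + δ ≤ #(S \ T) + 1 :=
    singleton_bound (puncture_ne_bot hc hi hci)
      (fun _ hx _ => apply_eq_zero_of_mem_puncture_shorten hx)
      (hS.mono (shorten_le C T)).le_hammingNorm
  lia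

theorem HasInformationLocality.exists_shorten (hloc : HasInformationLocality C r δ) {m : ℕ}
    (hm : m * r < Module.finrank F C) :
    ∃ T : Finset (Fin n), Module.finrank F C ≤ Module.finrank F (shorten C T) + m * r ∧
      Module.finrank F C + m * δ ≤ Module.finrank F (shorten C T) + #T + m := by
  induction m with
  | zero =>
    refine ⟨∅, ?_⟩
    rw [shorten_empty]
    simp
  | succ m ih =>
    rw [add_one_mul] at hm
    obtain ⟨T, hdim, hcard⟩ := ih (by lia)
    have hne : shorten C T ≠ ⊥ := Submodule.one_le_finrank_iff.1 (by lia)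
    obtain ⟨c, hc, hc0⟩ := Submodule.exists_mem_ne_zero_of_ne_bot hne
    obtain ⟨S, hS, i, hi, hci⟩ := hloc c (shorten_le C T hc) hc0
    have hstep_dim := (hS.mono (shorten_le C T)).finrank_le_finrank_shorten_add
    rw [shorten_shorten] at hstep_dim
    have hstep_card := hS.finrank_shorten_add_le hc hi hci
    have hunion : #(S \ T) + #T = #(T ∪ S) := by rw [card_sdiff_add_card, union_comm]
    exact ⟨T ∪ S, by lia, by lia⟩

theorem HasInformationLocality.finrank_add_le {d m : ℕ} (hloc : HasInformationLocality C r δ)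
    (hd : ∀ c ∈ C, c ≠ 0 → d ≤ hammingNorm c) (hm : m * r < Module.finrank F C) :
    Module.finrank F C + d + m * δ ≤ n + 1 + m := by
  obtain ⟨T, hdim, hcard⟩ := hloc.exists_shorten hm
  have hsingleton : Module.finrank F (shorten C T) + d ≤ #Tᶜ + 1 :=
    singleton_bound (Submodule.one_le_finrank_iff.1 (by lia))
      (fun c hc j hj => (mem_shorten.1 hc).2 j (by simpa using hj))
      (fun c hc => hd c (shorten_le C T hc))
  have hcompl : #T + #Tᶜ = n := by rw [card_add_card_compl, Fintype.card_fin]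
  lia

end Locality

theorem exists_ceil_div_eq_add_one {k r : ℕ} (hk : 0 < k) (hr : 0 < r) :
    ∃ m : ℕ, m * r < k ∧ ⌈(k : ℚ) / r⌉ = m + 1 := by
  obtain ⟨m, hm⟩ := Nat.exists_eq_add_one.2 (Nat.ceil_pos.2 (show 0 < (k : ℚ) / r by positivity))
  refine ⟨m, ?_, ?_⟩
  · have hlt : (m : ℚ) < k / r := Nat.lt_ceil.1 (by lia)
    exact_mod_cast (lt_div_iff₀ (by positivity)).1 hlt
  · rw [← Int.natCast_ceil_eq_ceil (by positivity), hm, Nat.cast_succ]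

theorem minDist_le_of_locality_general (k d r δ : ℕ) (C : Submodule F (Fin n → F))
    (hk : Module.finrank F C = k) (hd : IsMinDist F n C d) (hloc : HasInformationLocality C r δ) :
    (d : ℤ) ≤ (n : ℤ) - k + 1 - (⌈(k : ℚ) / r⌉ - 1) * ((δ : ℤ) - 1) := by
  obtain ⟨⟨c, hc, hc0, -⟩, hd_le⟩ := hd
  have hC : C ≠ ⊥ := (Submodule.ne_bot_iff C).2 ⟨c, hc, hc0⟩
  have hkpos : 0 < k := hk ▸ Submodule.one_le_finrank_iff.2 hC
  obtain ⟨m, hm, hceil⟩ := exists_ceil_div_eq_add_one hkpos (hloc.pos hC)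
  have hbound : (k : ℤ) + d + m * δ ≤ n + 1 + m := by
    exact_mod_cast hk ▸ hloc.finrank_add_le hd_le (hk ▸ hm)
  rw [hceil]
  linarith

/-- Generalized Singleton bound for codes with `(r,δ)`-locality. -/
theorem minDist_le_of_locality (k d r δ : ℕ) (C : Submodule F (Fin n → F))
    (hk : Module.finrank F C = k) (hkpos : 0 < k) (hr : 0 < r)
    (hd : IsMinDist F n C d) (hloc : HasLocality F n C r δ) :
    (d : ℤ) ≤ (n : ℤ) - k + 1 - (⌈(k : ℚ) / r⌉ - 1) * ((δ : ℤ) - 1) :=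
  minDist_le_of_locality_general F n k d r δ C hk hd hloc.hasInformationLocality
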